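/- arXiv:2509.14841 — 3 statements merged into one kernel-verified Lean document; each statement's English description precedes it below -/
import Mathlib

section
/- Let n be a positive natural number and σ a real number with σ ≠ 0 (the constant noise magnitude at every frequency). Let C : Fin n → ℝ be a nonnegative antitone function (the content magnitude spectrum, which decays with frequency). Let w₁, w₂ : Fin n → ℝ be nonnegative weight functions with Σᵢ w₁ i > 0, Σᵢ w₂ i > 0, such that for all i ≤ j, w₁ i * w₂ j ≥ w₂ i * w₁ j. Define the signal-to-noise ratio under weights w as SNR(w) = (Σᵢ w i * (C i)²) / (Σᵢ w i * σ²). Then SNR(w₂) ≤ SNR(w₁). -/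
/-- As the frequency-dependent learning weights shift emphasis from low to high
frequencies (likelihood-ratio ordering), the effective signal-to-noise ratio
does not increase. -/
theorem snr_le_of_weight_shift
    (n : ℕ) (hn : 0 < n) (σ : ℝ) (hσ : σ ≠ 0)
    (C : Fin n → ℝ) (hC0 : ∀ i, 0 ≤ C i) (hC : Antitone C)
    (w₁ w₂ : Fin n → ℝ)
    (hw₁ : ∀ i, 0 ≤ w₁ i) (hw₂ : ∀ i, 0 ≤ w₂ i)
    (hs₁ : 0 < ∑ i, w₁ i) (hs₂ : 0 < ∑ i, w₂ i)
    (hlr : ∀ i j : Fin n, i ≤ j → w₁ i * w₂ j ≥ w₂ i * w₁ j) :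
    (∑ i, w₂ i * (C i) ^ 2) / (∑ i, w₂ i * σ ^ 2) ≤
      (∑ i, w₁ i * (C i) ^ 2) / (∑ i, w₁ i * σ ^ 2) := by
  have hσ2 : 0 < σ ^ 2 := by positivity
  have key : 0 ≤ ∑ i, ∑ j, (w₁ i * w₂ j - w₂ i * w₁ j) * ((C i) ^ 2 - (C j) ^ 2) := by
    refine Finset.sum_nonneg fun i _ => Finset.sum_nonneg fun j _ => ?_
    rcases le_total i j with h | h
    · have h1 := hlr i j h
      have h2 : (C j) ^ 2 ≤ (C i) ^ 2 := pow_le_pow_left₀ (hC0 j) (hC h) 2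
      exact mul_nonneg (by linarith) (by linarith)
    · have h1 := hlr j i h
      have h2 : (C i) ^ 2 ≤ (C j) ^ 2 := pow_le_pow_left₀ (hC0 i) (hC h) 2
      exact mul_nonneg_of_nonpos_of_nonpos (by linarith) (by linarith)
  have expand : ∑ i, ∑ j, (w₁ i * w₂ j - w₂ i * w₁ j) * ((C i) ^ 2 - (C j) ^ 2)
      = (∑ i, w₁ i * (C i) ^ 2) * (∑ j, w₂ j) - (∑ i, w₁ i) * (∑ j, w₂ j * (C j) ^ 2)
        - (∑ i, w₂ i * (C i) ^ 2) * (∑ j, w₁ j)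
        + (∑ i, w₂ i) * (∑ j, w₁ j * (C j) ^ 2) := by
    simp only [Finset.sum_mul_sum, ← Finset.sum_sub_distrib, ← Finset.sum_add_distrib]
    refine Finset.sum_congr rfl fun i _ => Finset.sum_congr rfl fun j _ => ?_
    ring
  rw [expand] at key
  rw [← Finset.sum_mul, ← Finset.sum_mul,
    div_le_div_iff₀ (mul_pos hs₂ hσ2) (mul_pos hs₁ hσ2), ← mul_assoc, ← mul_assoc]
  exact mul_le_mul_of_nonneg_right (by linarith) hσ2.le
end

section
/- Let n be a positive natural number and σ a real number with σ ≠ 0. Let C : Fin n → ℝ be nonnegative and antitone. Let w₁, w₂ : Fin n → ℝ be nonnegative weight functions with Σᵢ w₁ i > 0 and Σᵢ w₂ i > 0, satisfying w₁ i * w₂ j ≥ w₂ i * w₁ j for all i ≤ j. Suppose moreover that there exist indices i₀ < j₀ with (C i₀)² > (C j₀)², w₁ i₀ > 0, w₂ j₀ > 0, and the strict inequality w₁ i₀ * w₂ j₀ > w₂ i₀ * w₁ j₀. Define SNR(w) = (Σᵢ w i * (C i)²) / (Σᵢ w i * σ²). Then SNR(w₂) < SNR(w₁), i.e. the signal-to-noise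 ratio strictly decreases. -/
/-- Strict version: under the likelihood-ratio weight shift toward high
frequencies, with a genuinely non-degenerate content spectrum and reweighting,
the signal-to-noise ratio strictly decreases. -/
theorem snr_lt_of_strict_weight_shift
    (n : ℕ) (hn : 0 < n) (σ : ℝ) (hσ : σ ≠ 0)
    (C : Fin n → ℝ) (hC0 : ∀ i, 0 ≤ C i) (hC : Antitone C)
    (w₁ w₂ : Fin n → ℝ)
    (hw₁ : ∀ i, 0 ≤ w₁ i) (hw₂ : ∀ i, 0 ≤ w₂ i)
    (hs₁ : 0 < ∑ i, w₁ i) (hs₂ : 0 < ∑ i, w₂ i)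
    (hlr : ∀ i j : Fin n, i ≤ j → w₁ i * w₂ j ≥ w₂ i * w₁ j)
    (i₀ j₀ : Fin n) (hij : i₀ < j₀)
    (hCij : (C i₀) ^ 2 > (C j₀) ^ 2)
    (hw₁i : 0 < w₁ i₀) (hw₂j : 0 < w₂ j₀)
    (hstrict : w₁ i₀ * w₂ j₀ > w₂ i₀ * w₁ j₀) :
    (∑ i, w₂ i * (C i) ^ 2) / (∑ i, w₂ i * σ ^ 2) <
      (∑ i, w₁ i * (C i) ^ 2) / (∑ i, w₁ i * σ ^ 2) := by
  have hanti : ∀ i j : Fin n, i ≤ j → (C j) ^ 2 ≤ (C i) ^ 2 := fun i j h =>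
    pow_le_pow_left₀ (hC0 j) (hC h) 2
  have hterm : ∀ i j : Fin n,
      0 ≤ (w₁ i * w₂ j - w₂ i * w₁ j) * ((C i) ^ 2 - (C j) ^ 2) := by
    intro i j
    rcases le_total i j with h | h
    · exact mul_nonneg (sub_nonneg.2 (hlr i j h)) (sub_nonneg.2 (hanti i j h))
    · have h1 := hlr j i h
      have h2 := hanti j i h
      exact mul_nonneg_of_nonpos_of_nonpos (by linarith) (by linarith)
  have hpos : 0 < ∑ i, ∑ j, (w₁ i * w₂ j - w₂ i * w₁ j) * ((C i) ^ 2 - (C j) ^ 2) := by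
    refine Finset.sum_pos' (fun i _ => Finset.sum_nonneg fun j _ => hterm i j)
      ⟨i₀, Finset.mem_univ _, ?_⟩
    exact Finset.sum_pos' (fun j _ => hterm i₀ j)
      ⟨j₀, Finset.mem_univ _, mul_pos (sub_pos.2 hstrict) (sub_pos.2 hCij)⟩
  have hexp : ∑ i, ∑ j, (w₁ i * w₂ j - w₂ i * w₁ j) * ((C i) ^ 2 - (C j) ^ 2)
      = 2 * ((∑ i, w₁ i * (C i) ^ 2) * (∑ i, w₂ i)
        - (∑ i, w₂ i * (C i) ^ 2) * (∑ i, w₁ i)) := by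
    have h : ∀ i j : Fin n, (w₁ i * w₂ j - w₂ i * w₁ j) * ((C i) ^ 2 - (C j) ^ 2)
        = (w₁ i * (C i) ^ 2) * w₂ j - w₁ i * (w₂ j * (C j) ^ 2)
          - (w₂ i * (C i) ^ 2) * w₁ j + w₂ i * (w₁ j * (C j) ^ 2) := by
      intro i j; ring
    simp only [h, Finset.sum_add_distrib, Finset.sum_sub_distrib, ← Finset.mul_sum,
      ← Finset.sum_mul]
    ring
  have hσ2 : 0 < σ ^ 2 := by positivity
  rw [← Finset.sum_mul, ← Finset.sum_mul, div_lt_div_iff₀ (mul_pos hs₂ hσ2) (mul_pos hs₁ hσ2),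
    ← mul_assoc, ← mul_assoc]
  exact mul_lt_mul_of_pos_right (by linarith) hσ2
end

section
/- Let n be a positive natural number and σ a real number with σ ≠ 0. Let C : Fin n → ℝ be nonnegative and antitone. Let w : ℕ → Fin n → ℝ be a family of weight functions indexed by training time t, each nonnegative with Σᵢ w t i > 0 for every t, and such that for every t and all indices i ≤ j, w t i * w (t+1) j ≥ w (t+1) i * w t j (at each step the weights shift relative emphasis from low to high frequencies). Define SNR(t) = (Σᵢ w t i * (C i)²) / (Σᵢ w t i * σ²). Then the function t ↦ SNR(t) is antitone on ℕ: for all s ≤ t, SNR(t) ≤ SNR(s). -/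
/-- Temporal SNR degradation: if at each training step the frequency-dependent
learning weights shift emphasis from low to high frequencies in the
likelihood-ratio sense, then the signal-to-noise ratio is antitone in time. -/
theorem snr_antitone_in_time
    (n : ℕ) (hn : 0 < n) (σ : ℝ) (hσ : σ ≠ 0)
    (C : Fin n → ℝ) (hC0 : ∀ i, 0 ≤ C i) (hC : Antitone C)
    (w : ℕ → Fin n → ℝ)
    (hw : ∀ t i, 0 ≤ w t i)
    (hs : ∀ t, 0 < ∑ i, w t i)
    (hlr : ∀ t, ∀ i j : Fin n, i ≤ j →
      w t i * w (t + 1) j ≥ w (t + 1) i * w t j) :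
    Antitone (fun t => (∑ i, w t i * (C i) ^ 2) / (∑ i, w t i * σ ^ 2)) := by
  refine antitone_nat_of_succ_le fun t => ?_
  have hσ2 : 0 < σ ^ 2 := by positivity
  have key : (∑ i, w (t + 1) i * (C i) ^ 2) * (∑ j, w t j)
      ≤ (∑ i, w t i * (C i) ^ 2) * (∑ j, w (t + 1) j) := by
    have hpos : 0 ≤ ∑ i, ∑ j, ((C i) ^ 2 - (C j) ^ 2) *
        (w t i * w (t + 1) j - w (t + 1) i * w t j) := by
      refine Finset.sum_nonneg fun i _ => Finset.sum_nonneg fun j _ => ?_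
      rcases le_total i j with h | h
      · have h1 : (C j) ^ 2 ≤ (C i) ^ 2 := pow_le_pow_left₀ (hC0 j) (hC h) 2
        have h2 := hlr t i j h
        exact mul_nonneg (by linarith) (by linarith)
      · have h1 : (C i) ^ 2 ≤ (C j) ^ 2 := pow_le_pow_left₀ (hC0 i) (hC h) 2
        have h2 := hlr t j i h
        exact mul_nonneg_of_nonpos_of_nonpos (by linarith) (by linarith)
    have e1 : ∑ i, ∑ j, ((C i) ^ 2 - (C j) ^ 2) *
        (w t i * w (t + 1) j - w (t + 1) i * w t j)
        = ∑ i, ∑ j, ((w t i * (C i) ^ 2) * w (t + 1) j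
            - (w (t + 1) i * (C i) ^ 2) * w t j)
          + ∑ i, ∑ j, ((w t j * (C j) ^ 2) * w (t + 1) i
            - (w (t + 1) j * (C j) ^ 2) * w t i) := by
      simp only [← Finset.sum_add_distrib]
      refine Finset.sum_congr rfl fun i _ => Finset.sum_congr rfl fun j _ => ?_
      ring
    have e2 : ∑ i, ∑ j, ((w t j * (C j) ^ 2) * w (t + 1) i
            - (w (t + 1) j * (C j) ^ 2) * w t i)
        = ∑ i, ∑ j, ((w t i * (C i) ^ 2) * w (t + 1) j
            - (w (t + 1) i * (C i) ^ 2) * w t j) := Finset.sum_comm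
    have e3 : ∑ i, ∑ j, ((w t i * (C i) ^ 2) * w (t + 1) j
            - (w (t + 1) i * (C i) ^ 2) * w t j)
        = (∑ i, w t i * (C i) ^ 2) * (∑ j, w (t + 1) j)
          - (∑ i, w (t + 1) i * (C i) ^ 2) * (∑ j, w t j) := by
      simp only [Finset.sum_sub_distrib, Finset.sum_mul_sum]
    rw [e1, e2, e3] at hpos
    linarith
  simp only [← Finset.sum_mul]
  rw [div_le_div_iff₀ (mul_pos (hs _) hσ2) (mul_pos (hs _) hσ2),
    ← mul_assoc, ← mul_assoc]
  exact mul_le_mul_of_nonneg_right key hσ2.le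
end
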